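/- The variance of the new estimator admits the integral representation Var[ê] = ∫₀¹ (q(S) − q(D(S;z,r)))² / z² dz, where D(S;z,r) = {s ∈ S : z < r(s)}, q(∅) := 0, and the variance is q(S)²(1/pₙ − 1) + Σ_{j=1}^{n−1}(q(S) − q(D(S;p_j,r)))²(1/p_j − 1/p_{j+1}) with p₁ < ... < pₙ the distinct values of r on S. -/

import Mathlib

open MeasureTheory

/-!
The set `D(S; z, r)` changes only at the breakpoints `p₁ ≤ … ≤ pₙ`: it is all of `S` below `p₁`,
where the integrand therefore vanishes and the singularity of `1 / z²` at `0` does no harm, and it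
is empty from `pₙ` on. In between the integrand is a step function times `1 / z²`, and
`∫ₐᵇ z⁻² dz = 1 / a - 1 / b` on each piece.
-/

section Superlevel

/-- The set `D(S; z, r) = {s ∈ S : z < r s}` of the elements of `S` that `r` ranks above the
threshold `z`; thresholds may live in any ordered type. -/
def superlevel {α β : Type*} [LT β] [DecidableLT β] (S : Finset α) (r : α → β) (z : β) :
    Finset α :=
  S.filter (fun s => z < r s)

variable {α β : Type*} [LinearOrder β] {S : Finset α} {r : α → β}

theorem superlevel_congr {y z : β} (hyz : y ≤ z) (h : ∀ s ∈ S, r s ∉ Set.Ioc y z) :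
    superlevel S r z = superlevel S r y :=
  Finset.filter_congr fun s hs =>
    ⟨hyz.trans_lt, fun hy => lt_of_not_ge fun hz => h s hs ⟨hy, hz⟩⟩

variable {n : ℕ} {p : ℕ → β}

theorem superlevel_eq_self_of_lt_first (hp : MonotoneOn p (Set.Iic n))
    (hr : Set.MapsTo r S (p '' Set.Ioc 0 n)) {z : β} (hz : z < p 1) : superlevel S r z = S := by
  refine Finset.filter_true_of_mem fun s hs => ?_
  obtain ⟨k, ⟨hk0, hkn⟩, hks⟩ := hr hs
  exact hks ▸ hz.trans_le (hp (Nat.one_le_of_lt (hk0.trans_le hkn)) hkn hk0)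

theorem superlevel_eq_empty_of_last_le (hp : MonotoneOn p (Set.Iic n))
    (hr : Set.MapsTo r S (p '' Set.Ioc 0 n)) {z : β} (hz : p n ≤ z) : superlevel S r z = ∅ := by
  refine Finset.filter_false_of_mem fun s hs => not_lt.mpr ?_
  obtain ⟨k, ⟨-, hkn⟩, hks⟩ := hr hs
  exact hks ▸ (hp hkn Set.self_mem_Iic hkn).trans hz

theorem superlevel_eq_of_mem_Ico (hp : MonotoneOn p (Set.Iic n))
    (hr : Set.MapsTo r S (p '' Set.Ioc 0 n)) {j : ℕ} (hj : j < n) {z : β}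
    (hz : z ∈ Set.Ico (p j) (p (j + 1))) : superlevel S r z = superlevel S r (p j) := by
  refine superlevel_congr hz.1 fun s hs hsz => ?_
  obtain ⟨k, ⟨-, hkn⟩, hks⟩ := hr hs
  rw [← hks] at hsz
  have hjk : j < k := hp.reflect_lt hj.le hkn hsz.1
  have hkj : k < j + 1 := hp.reflect_lt hkn hj (hsz.2.trans_lt hz.2)
  omega

end Superlevel

section StepFunction

variable {E : Type*} [NormedAddCommGroup E] [NormedSpace ℝ E] {μ : Measure ℝ}
  [NullSingletonClass μ] {g : ℝ → ℝ} {w : ℝ → E}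

theorem intervalIntegrable_smul_of_eqOn_const {a b c : ℝ} (hw : IntervalIntegrable w μ a b)
    (hg : Set.EqOn g (fun _ => c) (Set.uIoo a b)) :
    IntervalIntegrable (fun z => g z • w z) μ a b :=
  (hw.smul c).congr_uIoo fun z hz => congrArg (· • w z) (hg hz).symm

theorem integral_smul_of_eqOn_const {a b c : ℝ} (hg : Set.EqOn g (fun _ => c) (Set.uIoo a b)) :
    ∫ z in a..b, g z • w z ∂μ = c • ∫ z in a..b, w z ∂μ := by
  rw [← intervalIntegral.integral_smul]
  exact intervalIntegral.integral_congr_uIoo fun z hz => congrArg (· • w z) (hg hz)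

variable {m n : ℕ} {p c : ℕ → ℝ}

theorem intervalIntegrable_step_smul (hmn : m ≤ n)
    (hw : ∀ j ∈ Set.Ico m n, IntervalIntegrable w μ (p j) (p (j + 1)))
    (hg : ∀ j ∈ Set.Ico m n, Set.EqOn g (fun _ => c j) (Set.uIoo (p j) (p (j + 1)))) :
    IntervalIntegrable (fun z => g z • w z) μ (p m) (p n) :=
  IntervalIntegrable.trans_iterate_Ico hmn fun j hj =>
    intervalIntegrable_smul_of_eqOn_const (hw j hj) (hg j hj)

theorem integral_step_smul (hmn : m ≤ n)
    (hw : ∀ j ∈ Set.Ico m n, IntervalIntegrable w μ (p j) (p (j + 1)))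
    (hg : ∀ j ∈ Set.Ico m n, Set.EqOn g (fun _ => c j) (Set.uIoo (p j) (p (j + 1)))) :
    ∫ z in p m..p n, g z • w z ∂μ =
      ∑ j ∈ Finset.Ico m n, c j • ∫ z in p j..p (j + 1), w z ∂μ := by
  rw [← intervalIntegral.sum_integral_adjacent_intervals_Ico hmn fun j hj =>
    intervalIntegrable_smul_of_eqOn_const (hw j hj) (hg j hj)]
  exact Finset.sum_congr rfl fun j hj => integral_smul_of_eqOn_const (hg j (Finset.mem_Ico.mp hj))

theorem integral_superlevel_smul {α : Type*} {S : Finset α} {r : α → ℝ} (hn : 1 ≤ n)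
    (hp : MonotoneOn p (Set.Iic n)) (hr : Set.MapsTo r S (p '' Set.Ioc 0 n)) {b : ℝ}
    (hb : p n ≤ b) (hw : IntervalIntegrable w μ (p 1) b) (F : Finset α → ℝ) :
    ∫ z in p 1..b, F (superlevel S r z) • w z ∂μ =
      F ∅ • (∫ z in p n..b, w z ∂μ) +
        ∑ j ∈ Finset.Ico 1 n, F (superlevel S r (p j)) • ∫ z in p j..p (j + 1), w z ∂μ := by
  have hstep : ∀ j ∈ Set.Ico 1 n, Set.EqOn (fun z => F (superlevel S r z))
      (fun _ => F (superlevel S r (p j))) (Set.uIoo (p j) (p (j + 1))) := by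
    intro j hj z hz
    rw [Set.uIoo_of_le (hp hj.2.le hj.2 j.le_succ)] at hz
    exact congrArg F (superlevel_eq_of_mem_Ico hp hr hj.2 (Set.Ioo_subset_Ico_self hz))
  have htail : Set.EqOn (fun z => F (superlevel S r z)) (fun _ => F ∅) (Set.uIoo (p n) b) := by
    intro z hz
    rw [Set.uIoo_of_le hb] at hz
    exact congrArg F (superlevel_eq_empty_of_last_le hp hr hz.1.le)
  have hmem : ∀ j ∈ Set.Icc 1 n, p j ∈ Set.uIcc (p 1) b := fun j hj =>
    Set.Icc_subset_uIcc ⟨hp hn hj.2 hj.1, (hp hj.2 Set.self_mem_Iic hj.2).trans hb⟩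
  have hw_step : ∀ j ∈ Set.Ico 1 n, IntervalIntegrable w μ (p j) (p (j + 1)) := fun j hj =>
    hw.mono_set (Set.uIcc_subset_uIcc (hmem j ⟨hj.1, hj.2.le⟩) (hmem (j + 1) ⟨by omega, hj.2⟩))
  have hw_tail : IntervalIntegrable w μ (p n) b :=
    hw.mono_set (Set.uIcc_subset_uIcc (hmem n ⟨hn, le_rfl⟩) Set.right_mem_uIcc)
  rw [← intervalIntegral.integral_add_adjacent_intervals
      (intervalIntegrable_step_smul hn hw_step hstep)
      (intervalIntegrable_smul_of_eqOn_const hw_tail htail),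
    integral_step_smul hn hw_step hstep, integral_smul_of_eqOn_const htail, add_comm]

end StepFunction

theorem setIntegral_Ico_eq_intervalIntegral_of_eqOn_zero {E : Type*} [NormedAddCommGroup E]
    [NormedSpace ℝ E] {μ : Measure ℝ} [NullSingletonClass μ] {f : ℝ → E} {a b c : ℝ} (hab : a ≤ b)
    (hbc : b ≤ c) (hf : Set.EqOn f 0 (Set.Ico a b)) :
    ∫ z in Set.Ico a c, f z ∂μ = ∫ z in b..c, f z ∂μ := by
  have hzero : ∀ z ∈ Set.Ico a c \ Set.Ico b c, f z = 0 := fun z hz =>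
    hf ⟨hz.1.1, lt_of_not_ge fun hbz => hz.2 ⟨hbz, hz.1.2⟩⟩
  rw [setIntegral_eq_of_subset_of_forall_sdiff_eq_zero measurableSet_Ico
    (Set.Ico_subset_Ico_left hab) hzero, integral_Ico_eq_integral_Ioc,
    ← intervalIntegral.integral_of_le hbc]

theorem intervalIntegrable_inv_sq {a b : ℝ} (h : (0 : ℝ) ∉ Set.uIcc a b) :
    IntervalIntegrable (fun z : ℝ => (z ^ 2)⁻¹) volume a b := by
  simpa only [zpow_neg, zpow_ofNat] using
    intervalIntegral.intervalIntegrable_zpow (n := -2) (.inr h)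

theorem integral_inv_sq {a b : ℝ} (h : (0 : ℝ) ∉ Set.uIcc a b) :
    ∫ z in a..b, (z ^ 2)⁻¹ = 1 / a - 1 / b := by
  have hzpow := integral_zpow (n := -2) (a := a) (b := b) (.inr ⟨by norm_num, h⟩)
  norm_num only [zpow_neg, zpow_ofNat, zpow_one] at hzpow
  rw [hzpow]
  ring

theorem image_eq_image_Ioc {α β : Type*} [DecidableEq β] {S : Finset α} {r : α → β} {n : ℕ}
    {p : ℕ → β} (himg : S.image r = (Finset.range n).image (fun j => p (j + 1))) :
    r '' S = p '' Set.Ioc 0 n := by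
  have hshift : (· + 1) '' Set.Iio n = Set.Ioc 0 n := by
    ext k
    simp only [Set.mem_image, Set.mem_Iio, Set.mem_Ioc]
    exact ⟨by omega, fun hk => ⟨k - 1, by omega⟩⟩
  rw [← Finset.coe_image, himg, Finset.coe_image, Finset.coe_range, ← hshift, Set.image_image]

theorem stmt_7_general {α : Type*} {S : Finset α} {r : α → ℝ} {n : ℕ} (hn : 1 ≤ n) {p : ℕ → ℝ}
    (hp0 : p 0 = 0) (hmono : ∀ i < n, p i < p (i + 1))
    (himg : S.image r = (Finset.range n).image (fun j => p (j + 1)))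
    {b : ℝ} (hb : ∀ s ∈ S, r s ≤ b) {F : Finset α → ℝ} (hF : F S = 0) :
    (∫ z in Set.Ico (0 : ℝ) b, F (superlevel S r z) / z ^ 2)
      = F ∅ * (1 / p n - 1 / b)
        + ∑ j ∈ Finset.Ico 1 n, F (superlevel S r (p j)) * (1 / p j - 1 / p (j + 1)) := by
  have hp : MonotoneOn p (Set.Iic n) := (strictMonoOn_Iic_of_lt_succ hmono).monotoneOn
  have hrange : r '' S = p '' Set.Ioc 0 n := image_eq_image_Ioc himg
  have hr : Set.MapsTo r S (p '' Set.Ioc 0 n) := Set.mapsTo_iff_image_subset.mpr hrange.subset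
  have hp1 : 0 < p 1 := hp0 ▸ hmono 0 hn
  have hpos : ∀ j ∈ Set.Icc 1 n, 0 < p j := fun j hj => hp1.trans_le (hp hn hj.2 hj.1)
  have hpn : p n ≤ b := by
    obtain ⟨s, hs, hsn⟩ := hrange.superset ⟨n, ⟨hn, le_rfl⟩, rfl⟩
    exact hsn ▸ hb s hs
  have hpb : p 1 ≤ b := (hp hn Set.self_mem_Iic hn).trans hpn
  have hb0 : 0 < b := hp1.trans_le hpb
  have hzero : Set.EqOn (fun z => F (superlevel S r z) / z ^ 2) 0 (Set.Ico 0 (p 1)) := by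
    intro z hz
    simp only [superlevel_eq_self_of_lt_first hp hr hz.2, hF, zero_div, Pi.zero_apply]
  calc ∫ z in Set.Ico 0 b, F (superlevel S r z) / z ^ 2
    _ = ∫ z in p 1..b, F (superlevel S r z) • (z ^ 2)⁻¹ := by
      rw [setIntegral_Ico_eq_intervalIntegral_of_eqOn_zero hp1.le hpb hzero]
      simp only [div_eq_mul_inv, smul_eq_mul]
    _ = F ∅ * (∫ z in p n..b, (z ^ 2)⁻¹) + ∑ j ∈ Finset.Ico 1 n,
          F (superlevel S r (p j)) * ∫ z in p j..p (j + 1), (z ^ 2)⁻¹ :=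
      integral_superlevel_smul hn hp hr hpn
        (intervalIntegrable_inv_sq (Set.notMem_uIcc_of_lt hp1 hb0)) F
    _ = F ∅ * (1 / p n - 1 / b) + ∑ j ∈ Finset.Ico 1 n,
          F (superlevel S r (p j)) * (1 / p j - 1 / p (j + 1)) := by
      rw [integral_inv_sq (Set.notMem_uIcc_of_lt (hpos n ⟨hn, le_rfl⟩) hb0)]
      congr 1
      refine Finset.sum_congr rfl fun j hj => ?_
      obtain ⟨hj1, hjn⟩ := Finset.mem_Ico.mp hj
      rw [integral_inv_sq (Set.notMem_uIcc_of_lt (hpos j ⟨hj1, hjn.le⟩)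
        (hpos (j + 1) ⟨by omega, hjn⟩))]

/-- Integral representation of the variance of the new estimator:
`∫₀¹ (q(S) − q(D(S;z,r)))²/z² dz
  = q(S)²(1/pₙ − 1) + ∑_{j=1}^{n−1}(q(S) − q(D(S;p_j,r)))²(1/p_j − 1/p_{j+1})`. -/
theorem stmt_7 {α : Type*} [DecidableEq α] (S : Finset α) (hS : S.Nonempty)
    (r : α → ℝ) (hr : ∀ s ∈ S, r s ∈ Set.Ioc (0 : ℝ) 1)
    (n : ℕ) (hn : 1 ≤ n) (p : ℕ → ℝ) (hp0 : p 0 = 0)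
    (hmono : ∀ i < n, p i < p (i + 1))
    (himg : S.image r = (Finset.range n).image (fun j => p (j + 1)))
    (q : Finset α → ℝ) (hq0 : q (∅ : Finset α) = 0) :
    (∫ z in Set.Ico (0 : ℝ) 1, (q S - q (S.filter (fun s => z < r s))) ^ 2 / z ^ 2)
      = q S ^ 2 * (1 / p n - 1)
        + ∑ j ∈ Finset.Ico 1 n,
            (q S - q (S.filter (fun s => p j < r s))) ^ 2 * (1 / p j - 1 / p (j + 1)) := by
  simpa [hq0, superlevel] using stmt_7_general hn hp0 hmono himg (fun s hs => (hr s hs).2)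
    (F := fun T => (q S - q T) ^ 2) (by simp)
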